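/- For ν > −1/2, real x ≥ 0, and integer j ≥ 0, the j-th derivative of the function x ↦ G_ν(x²) is bounded in absolute value by Γ((j+1)/2)/(4^ν Γ(j/2 + ν + 1)), where G_ν(z²) = (1/(4^ν Γ(ν+1/2))) ∫_{−1}^1 (1−s²)^{ν−1/2} e^{ixs} ds. -/

import Mathlib

noncomputable def G (ν : ℝ) (w : ℂ) : ℂ :=
  (((4:ℝ)^(-ν) * Real.sqrt Real.pi : ℝ) : ℂ) *
    ∑' m : ℕ, ((-1 : ℂ)^m * (w/4)^m) / ((m.factorial : ℂ) * ((Real.Gamma (ν + m + 1) : ℝ) : ℂ))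

open MeasureTheory Set in
lemma beta_aux (a b : ℝ) (ha : 0 < a) (hb : 0 < b) :
    IntegrableOn (fun t : ℝ => t ^ (a-1) * (1-t) ^ (b-1)) (Ioo 0 1) ∧
    ∫ t in Ioo (0:ℝ) 1, t ^ (a-1) * (1-t) ^ (b-1)
      = Real.Gamma a * Real.Gamma b / Real.Gamma (a + b) := by
  have key : ∫ t in Ioo (0:ℝ) 1, t ^ (a-1) * (1-t) ^ (b-1)
      = Real.Gamma a * Real.Gamma b / Real.Gamma (a + b) := by
    have h := ProbabilityTheory.beta_eq_betaIntegralReal a b ha hb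
    rw [ProbabilityTheory.beta] at h
    rw [h, Complex.betaIntegral, intervalIntegral.integral_of_le (by norm_num),
      ← integral_Ioc_eq_integral_Ioo, ← RCLike.re_to_complex, ← integral_re]
    · refine setIntegral_congr_fun measurableSet_Ioc fun x ⟨hx1, hx₂⟩ ↦ ?_
      norm_cast
      rw [← Complex.ofReal_cpow, ← Complex.ofReal_cpow, RCLike.re_to_complex,
        Complex.re_mul_ofReal, Complex.ofReal_re]
      all_goals linarith
    · have := Complex.betaIntegral_convergent (u := a) (v := b) (by simpa) (by simpa)
      rwa [intervalIntegrable_iff_integrableOn_Ioc_of_le (by simp), IntegrableOn] at this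
  refine ⟨?_, key⟩
  apply Integrable.of_integral_ne_zero
  rw [key]
  have := ProbabilityTheory.beta_pos ha hb
  exact this.ne'

lemma gamma_half_aux (m : ℕ) :
    Real.Gamma ((m:ℝ) + 1/2) * (4^m * m.factorial) = (2*m).factorial * Real.sqrt Real.pi := by
  induction m with
  | zero => simp [-one_div, Real.Gamma_one_half_eq]
  | succ k ih =>
    have h1 : ((k+1:ℕ):ℝ) + 1/2 = ((k:ℝ) + 1/2) + 1 := by push_cast; ring
    rw [h1, Real.Gamma_add_one (by positivity), show 2*(k+1) = 2*k+1+1 by ring,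
      Nat.factorial_succ, Nat.factorial_succ, Nat.factorial_succ]
    push_cast
    linear_combination (((k:ℝ) + 1/2) * 4 * (k+1)) * ih

noncomputable def wt (ν t : ℝ) : ℝ := t ^ ((1/2 : ℝ) - 1) * (1-t) ^ (ν + 1/2 - 1)

lemma wt_meas (ν : ℝ) : Measurable (wt ν) := by unfold wt; fun_prop

open Set in
lemma wt_nonneg (ν t : ℝ) (ht : t ∈ Ioo (0:ℝ) 1) : 0 ≤ wt ν t :=
  mul_nonneg (Real.rpow_nonneg ht.1.le _) (Real.rpow_nonneg (by linarith [ht.2]) _)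

open MeasureTheory Set in
lemma wt_int (ν : ℝ) (hν : -(1/2) < ν) (j : ℕ) :
    IntegrableOn (fun t : ℝ => Real.sqrt t ^ j * wt ν t) (Ioo 0 1) ∧
    ∫ t in Ioo (0:ℝ) 1, Real.sqrt t ^ j * wt ν t
      = Real.Gamma ((j+1)/2) * Real.Gamma (ν + 1/2) / Real.Gamma (j/2 + ν + 1) := by
  have h := beta_aux ((j+1)/2) (ν + 1/2) (by positivity) (by linarith)
  have e : EqOn (fun t : ℝ => t ^ (((j:ℝ)+1)/2-1) * (1-t) ^ (ν + 1/2-1))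
      (fun t : ℝ => Real.sqrt t ^ j * wt ν t) (Ioo 0 1) := by
    intro t ht
    simp only [wt]
    rw [← mul_assoc, Real.sqrt_eq_rpow, ← Real.rpow_natCast, ← Real.rpow_mul ht.1.le,
      ← Real.rpow_add ht.1]
    congr 2
    ring
  refine ⟨h.1.congr_fun e measurableSet_Ioo, ?_⟩
  rw [← setIntegral_congr_fun measurableSet_Ioo e, h.2]
  congr 2
  ring

noncomputable def FF (ν : ℝ) (j : ℕ) (x : ℝ) : ℝ :=
  ∫ t in Set.Ioo (0:ℝ) 1, (Real.sqrt t ^ j * wt ν t) * Real.cos (x * Real.sqrt t + j * (Real.pi/2))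

open MeasureTheory Set in
lemma FF_deriv (ν : ℝ) (hν : -(1/2) < ν) (j : ℕ) (x : ℝ) :
    HasDerivAt (FF ν j) (FF ν (j+1) x) x := by
  have hm := wt_meas ν
  have := hasDerivAt_integral_of_dominated_loc_of_deriv_le (𝕜 := ℝ)
    (μ := volume.restrict (Ioo (0:ℝ) 1)) (x₀ := x) (s := univ)
    (F := fun x t => (Real.sqrt t ^ j * wt ν t) * Real.cos (x * Real.sqrt t + j * (Real.pi/2)))
    (F' := fun x t => (Real.sqrt t ^ (j+1) * wt ν t) *
      Real.cos (x * Real.sqrt t + (j+1:ℕ) * (Real.pi/2)))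
    (bound := fun t => Real.sqrt t ^ (j+1) * wt ν t)
    Filter.univ_mem ?_ ?_ ?_ ?_ ?_ ?_
  · exact this.2
  · exact Filter.Eventually.of_forall fun y => by
      apply Measurable.aestronglyMeasurable; fun_prop
  · refine Integrable.mono (wt_int ν hν j).1 (by apply Measurable.aestronglyMeasurable; fun_prop) ?_
    refine Filter.Eventually.of_forall fun t => ?_
    rw [norm_mul]
    exact mul_le_of_le_one_right (norm_nonneg _) (Real.abs_cos_le_one _)
  · apply Measurable.aestronglyMeasurable; fun_prop
  · filter_upwards [ae_restrict_mem measurableSet_Ioo] with t ht y _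
    rw [norm_mul, Real.norm_of_nonneg (mul_nonneg (by positivity) (wt_nonneg ν t ht))]
    exact mul_le_of_le_one_right (mul_nonneg (by positivity) (wt_nonneg ν t ht))
      (Real.abs_cos_le_one _)
  · exact (wt_int ν hν (j+1)).1
  · refine Filter.Eventually.of_forall fun t y _ => ?_
    have h1 : HasDerivAt (fun y : ℝ => y * Real.sqrt t + j * (Real.pi/2)) (1 * Real.sqrt t) y :=
      ((hasDerivAt_id y).mul_const _).add_const _
    refine (h1.cos.const_mul (Real.sqrt t ^ j * wt ν t)).congr_deriv ?_
    push_cast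
    rw [add_mul (j:ℝ), one_mul, one_mul, ← add_assoc, Real.cos_add_pi_div_two]
    ring

open MeasureTheory Set in
lemma FF_bound (ν : ℝ) (hν : -(1/2) < ν) (j : ℕ) (x : ℝ) :
    ‖FF ν j x‖ ≤ Real.Gamma ((j+1)/2) * Real.Gamma (ν + 1/2) / Real.Gamma (j/2 + ν + 1) := by
  rw [← (wt_int ν hν j).2]
  refine norm_integral_le_of_norm_le (wt_int ν hν j).1 ?_
  filter_upwards [ae_restrict_mem measurableSet_Ioo] with t ht
  rw [norm_mul, Real.norm_of_nonneg (mul_nonneg (by positivity) (wt_nonneg ν t ht))]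
  exact mul_le_of_le_one_right (mul_nonneg (by positivity) (wt_nonneg ν t ht))
    (Real.abs_cos_le_one _)

open MeasureTheory Set in
lemma FF_sum (ν : ℝ) (hν : -(1/2) < ν) (x : ℝ) :
    HasSum (fun m : ℕ => Real.Gamma (ν + 1/2) * Real.sqrt Real.pi *
      (((-1)^m * (x^2/4)^m) / ((m.factorial : ℝ) * Real.Gamma (ν + m + 1)))) (FF ν 0 x) := by
  have hm := wt_meas ν
  have hs : Summable fun m : ℕ => |x| ^ (2*m) / (2*m).factorial :=
    (Real.summable_pow_div_factorial |x|).comp_injective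
      (i := fun m : ℕ => 2*m) (fun a b h => by simpa using h)
  have h0 : IntegrableOn (wt ν) (Ioo 0 1) := by simpa using (wt_int ν hν 0).1
  have := hasSum_integral_of_dominated_convergence (μ := volume.restrict (Ioo (0:ℝ) 1))
    (F := fun (m : ℕ) t => wt ν t * ((-1)^m * (x * Real.sqrt t)^(2*m) / (2*m).factorial))
    (f := fun t => wt ν t * Real.cos (x * Real.sqrt t))
    (fun m t => wt ν t * (|x| ^ (2*m) / (2*m).factorial)) ?_ ?_ ?_ ?_ ?_
  · unfold FF
    simp only [pow_zero, one_mul, Nat.cast_zero, zero_mul, add_zero]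
    refine (congrArg (fun f : ℕ → ℝ => HasSum f _) (funext fun m => ?_)).mpr this
    have e : ∀ t : ℝ, wt ν t * ((-1)^m * (x * Real.sqrt t)^(2*m) / (2*m).factorial)
        = ((-1)^m * x^(2*m) / (2*m).factorial) * (Real.sqrt t^(2*m) * wt ν t) := by
      intro t; rw [mul_pow]; ring
    simp_rw [e]
    rw [integral_const_mul, (wt_int ν hν (2*m)).2]
    have g := gamma_half_aux m
    have e1 : (((2*m:ℕ):ℝ)+1)/2 = m + 1/2 := by push_cast; ring
    have e2 : ((2*m:ℕ):ℝ)/2 + ν + 1 = ν + m + 1 := by push_cast; ring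
    rw [e1, e2]
    have hG : Real.Gamma (ν + m + 1) ≠ 0 :=
      (Real.Gamma_pos_of_pos (by have : (0:ℝ) ≤ m := by positivity
                                 linarith)).ne'
    have hf : ((2*m).factorial : ℝ) ≠ 0 := by positivity
    have hf' : (m.factorial : ℝ) ≠ 0 := by positivity
    have g' : Real.Gamma ((m:ℝ) + 1/2) = (2*m).factorial * Real.sqrt Real.pi / (4^m * m.factorial) := by
      rw [← g]; field_simp
    rw [g', div_pow, pow_mul]
    field_simp
  · intro m; apply Measurable.aestronglyMeasurable; fun_prop
  · intro m
    filter_upwards [ae_restrict_mem measurableSet_Ioo] with t ht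
    rw [norm_mul, Real.norm_of_nonneg (wt_nonneg ν t ht)]
    refine mul_le_mul_of_nonneg_left ?_ (wt_nonneg ν t ht)
    rw [norm_div, norm_mul, norm_pow, norm_pow, norm_mul, norm_neg, norm_one, one_pow, one_mul,
      Real.norm_natCast, Real.norm_eq_abs, Real.norm_of_nonneg (Real.sqrt_nonneg t)]
    have : Real.sqrt t ≤ 1 := Real.sqrt_le_one.2 ht.2.le
    gcongr
    exact mul_le_of_le_one_right (abs_nonneg _) this
  · exact Filter.Eventually.of_forall fun t => hs.mul_left _
  · simp_rw [tsum_mul_left]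
    exact h0.mul_const _
  · exact Filter.Eventually.of_forall fun t => (Real.hasSum_cos _).mul_left _

lemma G_eq (ν : ℝ) (hν : -(1/2) < ν) (x : ℝ) :
    G ν ((x:ℂ)^2) = (((4:ℝ)^(-ν) / Real.Gamma (ν + 1/2) * FF ν 0 x : ℝ) : ℂ) := by
  have hG : Real.Gamma (ν + 1/2) ≠ 0 := (Real.Gamma_pos_of_pos (by linarith)).ne'
  rw [← (FF_sum ν hν x).tsum_eq, tsum_mul_left, G]
  have : ∀ a b c S : ℝ, b ≠ 0 → a / b * (b * c * S) = (a * c) * S := by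
    intro a b c S hb; field_simp
  rw [this _ _ _ _ hG, Complex.ofReal_mul _ (tsum _), Complex.ofReal_tsum]
  congr 2
  ext m
  push_cast
  rfl

theorem G_deriv_bound (ν : ℝ) (hν : -(1/2) < ν) (j : ℕ) (x : ℝ) (hx : 0 ≤ x) :
    ‖iteratedDeriv j (fun x : ℝ => G ν ((x:ℂ)^2)) x‖
      ≤ Real.Gamma ((j+1)/2) / ((4:ℝ)^ν * Real.Gamma ((j:ℝ)/2 + ν + 1)) := by
  have hG : 0 < Real.Gamma (ν + 1/2) := Real.Gamma_pos_of_pos (by linarith)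
  have key : ∀ j : ℕ, iteratedDeriv j (fun x : ℝ => G ν ((x:ℂ)^2)) =
      fun x => (((4:ℝ)^(-ν) / Real.Gamma (ν + 1/2) * FF ν j x : ℝ) : ℂ) := by
    intro j
    induction j with
    | zero => ext x; rw [iteratedDeriv_zero, G_eq ν hν]
    | succ k ih =>
      rw [iteratedDeriv_succ, ih]
      ext x
      exact ((FF_deriv ν hν k x).const_mul _).ofReal_comp.deriv
  have h4 : (0:ℝ) < 4 ^ ν := by positivity
  have h2 : 0 < Real.Gamma ((j:ℝ)/2 + ν + 1) :=
    Real.Gamma_pos_of_pos (by have : (0:ℝ) ≤ j := by positivity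
                              linarith)
  rw [key, Complex.norm_real, norm_mul, Real.norm_of_nonneg (by positivity)]
  refine (mul_le_mul_of_nonneg_left (FF_bound ν hν j x) (by positivity)).trans (le_of_eq ?_)
  rw [Real.rpow_neg (by norm_num)]
  generalize Real.Gamma (ν + 1/2) = A at *
  generalize Real.Gamma ((j:ℝ)/2 + ν + 1) = B at *
  field_simp
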